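/- arXiv:1702.06223 — 3 statements merged into one kernel-verified Lean document; each statement's English description precedes it below -/
import Mathlib

section
/- Let λ, λ' ∈ ℂ with λ·λ' = q²/((1 − q²)(q − q⁻¹)). Then the character-shifted elements satisfy the quantized Weyl algebra relation: (E·K' + λ·K')·(F + λ'·K') − q²·(F + λ'·K')·(E·K' + λ·K') = (q²/(q − q⁻¹))·1. -/
/-!
For the `a`-commutator `[x, y]ₐ = x y - a y x` with `a = q²`, the relations of `U_q(sl₂)` make
`[E K⁻¹, K⁻¹]ₐ` and `[K⁻¹, F]ₐ` vanish. By bilinearity, shifting `E K⁻¹` and `F` by `s K⁻¹` and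
`t K⁻¹` therefore changes `[E K⁻¹, F]ₐ` only by `s t [K⁻¹, K⁻¹]ₐ = s t (1 - a) K⁻²`. On the other
hand `[E K⁻¹, F]ₐ = a (E F - F E) K⁻¹` is a scalar minus the same scalar times `K⁻²`, so one
condition on `s t` cancels the two multiples of `K⁻²`.
-/

section Bilinear

variable {R A : Type*} [CommRing R] [NonUnitalNonAssocRing A] [Module R A]
  [IsScalarTower R A A] [SMulCommClass R A A]

/-- The `a`-commutator `x * y - a • (y * x)`, bundled as a bilinear map in `x` and `y`. The
parameter is the coefficient itself, so the `q²`-commutator is `qCommutator (q ^ 2)`. -/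
def qCommutator (a : R) : A →ₗ[R] A →ₗ[R] A :=
  LinearMap.mul R A - a • (LinearMap.mul R A).flip

theorem qCommutator_apply (a : R) (x y : A) :
    qCommutator a x y = x * y - a • (y * x) :=
  rfl

theorem qCommutator_eq_zero_iff {a : R} {x y : A} :
    qCommutator a x y = 0 ↔ x * y = a • (y * x) :=
  sub_eq_zero

theorem qCommutator_self (a : R) (x : A) :
    qCommutator a x x = (1 - a) • (x * x) := by
  rw [qCommutator_apply, sub_smul, one_smul]

theorem qCommutator_add_smul_add_smul {a : R} {x y z : A}
    (hxz : qCommutator a x z = 0) (hzy : qCommutator a z y = 0) (s t : R) :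
    qCommutator a (x + s • z) (y + t • z) =
      qCommutator a x y + (s * t * (1 - a)) • (z * z) := by
  simp only [map_add, map_smul, LinearMap.add_apply, LinearMap.smul_apply, hxz, hzy,
    qCommutator_self, smul_zero, add_zero, zero_add, smul_smul]
  rw [mul_left_comm, mul_assoc]

end Bilinear

section Associative

variable {R A : Type*} [CommRing R] [NonUnitalRing A] [Module R A]
  [IsScalarTower R A A] [SMulCommClass R A A]

theorem qCommutator_mul_left (a : R) (x y z : A) :
    qCommutator a (x * y) z = x * qCommutator a y z + a • ((x * z - z * x) * y) := by
  simp only [qCommutator_apply, mul_sub, sub_mul, smul_sub, mul_smul_comm, mul_assoc]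
  abel

theorem qCommutator_mul_self_left (a : R) (x y : A) :
    qCommutator a (x * y) y = qCommutator a x y * y := by
  simp only [qCommutator_apply, sub_mul, smul_mul_assoc, mul_assoc]

end Associative

section Unital

variable {R A : Type*} [CommRing R] [Ring A] [Algebra R A]

theorem qCommutator_units_inv_left (a : R) (u : Aˣ) (x : A) :
    qCommutator a (↑u⁻¹) x = ↑u⁻¹ * qCommutator a x u * ↑u⁻¹ := by
  simp [qCommutator_apply, mul_sub, sub_mul, mul_assoc]

theorem qCommutator_units_inv_right (a : R) (u : Aˣ) (x : A) :
    qCommutator a x (↑u⁻¹) = ↑u⁻¹ * qCommutator a (↑u) x * ↑u⁻¹ := by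
  simp [qCommutator_apply, mul_sub, sub_mul, mul_assoc]

theorem qCommutator_mul_units_inv {a κ : R} {E F : A} {K : Aˣ}
    (hKF : qCommutator a (↑K⁻¹) F = 0) (hEF : E * F - F * E = κ • (↑K - ↑K⁻¹)) :
    qCommutator a (E * ↑K⁻¹) F = (a * κ) • (1 - ↑K⁻¹ * ↑K⁻¹ : A) := by
  rw [qCommutator_mul_left, hKF, hEF, mul_zero, zero_add, smul_mul_assoc, smul_smul, sub_mul,
    Units.mul_inv]

theorem uqsl2_shifted_weyl_relation_general {a κ s t : R} {E F : A} {K : Aˣ}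
    (hKE : K * E = a • (E * K)) (hFK : F * K = a • (K * F))
    (hEF : E * F - F * E = κ • (↑K - ↑K⁻¹)) (hst : s * t * (1 - a) = a * κ) :
    (E * ↑K⁻¹ + s • (↑K⁻¹ : A)) * (F + t • (↑K⁻¹ : A))
      - a • ((F + t • (↑K⁻¹ : A)) * (E * ↑K⁻¹ + s • (↑K⁻¹ : A))) = (a * κ) • (1 : A) := by
  have hE : qCommutator a (E * ↑K⁻¹) (↑K⁻¹ : A) = 0 := by
    rw [qCommutator_mul_self_left, qCommutator_units_inv_right,
      qCommutator_eq_zero_iff.2 hKE, mul_zero, zero_mul, zero_mul]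
  have hF : qCommutator a (↑K⁻¹) F = 0 := by
    rw [qCommutator_units_inv_left, qCommutator_eq_zero_iff.2 hFK, mul_zero, zero_mul]
  rw [← qCommutator_apply a (E * ↑K⁻¹ + _), qCommutator_add_smul_add_smul hE hF,
    qCommutator_mul_units_inv hF hEF, hst, ← smul_add, sub_add_cancel]

end Unital

/-- If `λ·λ' = q²/((1−q²)(q−q⁻¹))`, then the character-shifted elements satisfy the
quantized Weyl algebra relation. -/
theorem uqsl2_shifted_weyl_relation
    (q : ℂ) (hq0 : q ≠ 0) (hq1 : q ^ 2 ≠ 1)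
    {A : Type*} [Ring A] [Algebra ℂ A]
    (E F K K' : A)
    (hKK' : K * K' = 1) (hK'K : K' * K = 1)
    (hKE : K * E = (q ^ 2) • (E * K))
    (hKF : K * F = (q ^ 2)⁻¹ • (F * K))
    (hEF : E * F - F * E = (q - q⁻¹)⁻¹ • (K - K'))
    (lam lam' : ℂ)
    (hll : lam * lam' = q ^ 2 / ((1 - q ^ 2) * (q - q⁻¹))) :
    (E * K' + lam • K') * (F + lam' • K')
      - (q ^ 2) • ((F + lam' • K') * (E * K' + lam • K'))
      = (q ^ 2 / (q - q⁻¹)) • (1 : A) := by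
  have hFK : F * K = q ^ 2 • (K * F) := ((eq_inv_smul_iff₀ (pow_ne_zero 2 hq0)).1 hKF).symm
  have hll' : lam * lam' * (1 - q ^ 2) = q ^ 2 * (q - q⁻¹)⁻¹ := by
    rw [hll, div_mul_eq_div_div_swap, div_mul_cancel₀ _ (sub_ne_zero.2 hq1.symm), div_eq_mul_inv]
  rw [div_eq_mul_inv]
  exact uqsl2_shifted_weyl_relation_general (K := ⟨K, K', hKK', hK'K⟩) hKE hFK hEF hll'
end

section
/- Let w₁, w₂ ∈ S_m and suppose N(w₁) ∩ N(w₂) = {(k, k+1)} consists of a single simple pair. Then there exist w₁', w₂' ∈ S_m with N(w₁) ⊆ N(w₁'), N(w₂) ⊆ N(w₂'), N(w₁') ∩ N(w₂') = {(k, k+1)}, and N(w₁') ∪ N(w₂') = {(i,j) | 1 ≤ i < j ≤ m}. -/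
/-- The inversion set `N(w) = {(i,j) | i < j, w⁻¹(i) > w⁻¹(j)}` of a permutation,
realizing `Φ⁺(w)` in type `A_{m−1}`. -/
def invSet (m : ℕ) (w : Equiv.Perm (Fin m)) : Finset (Fin m × Fin m) :=
  Finset.univ.filter (fun p => p.1 < p.2 ∧ w⁻¹ p.2 < w⁻¹ p.1)

/-- A pair `(k, k+1)`, corresponding to a simple root. -/
def IsSimplePair {m : ℕ} (p : Fin m × Fin m) : Prop :=
  (p.1 : ℕ) + 1 = (p.2 : ℕ)

instance {m : ℕ} : DecidablePred (IsSimplePair (m := m)) :=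
  fun p => inferInstanceAs (Decidable ((p.1 : ℕ) + 1 = (p.2 : ℕ)))

/-- Orthogonality of the roots `e_i − e_j` and `e_k − e_l`: `{i,j} ∩ {k,l} = ∅`. -/
def OrthPair {m : ℕ} (p q : Fin m × Fin m) : Prop :=
  p.1 ≠ q.1 ∧ p.1 ≠ q.2 ∧ p.2 ≠ q.1 ∧ p.2 ≠ q.2

/-- A set of pairs is pairwise orthogonal. -/
def PairwiseOrth {m : ℕ} (B : Finset (Fin m × Fin m)) : Prop :=
  ∀ p ∈ B, ∀ q ∈ B, p ≠ q → OrthPair p q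

/-!
Read `w` as the word `w 0, w 1, …`, so that `N(w)` records which larger letters precede smaller
ones. In both words `k'` precedes `k`. A letter `x` between `k'` and `k` in `w₁` satisfies either
`x < k`, and then it precedes `k'` in `w₂`, or `k' < x`, and then it follows `k` in `w₂`. Moving
the former to the right of `k` and the latter to the left of `k'` therefore only creates inversions
which `w₂` does not have, and it makes `k'` and `k` adjacent: this is `w₁'`. Exchanging `k'` and `k`
removes just `(k, k')` from `N(w₁')`, and `w₂'` is the resulting word reversed, which complements
the inversion set.
-/

open Equiv

theorem tupleSort_inv_lt_iff {n : ℕ} {β : Type*} [LinearOrder β] {f : Fin n → β}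
    (hf : Function.Injective f) {x y : Fin n} :
    (Tuple.sort f)⁻¹ x < (Tuple.sort f)⁻¹ y ↔ f x < f y := by
  have hmono : StrictMono (f ∘ Tuple.sort f) :=
    (Tuple.monotone_sort f).strictMono_of_injective (hf.comp (Tuple.sort f).injective)
  simpa using (hmono.lt_iff_lt (a := (Tuple.sort f)⁻¹ x) (b := (Tuple.sort f)⁻¹ y)).symm

theorem swap_lt_swap_iff_of_covBy {α : Type*} [LinearOrder α] {a b s t : α} (hab : a ⋖ b) :
    swap a b s < swap a b t ↔ (s = b ∧ t = a) ∨ (s < t ∧ ¬(s = a ∧ t = b)) := by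
  have below (c : α) : c < b ↔ c ≤ a := hab.lt_iff_le_left
  have above (c : α) : a < c ↔ b ≤ c := hab.lt_iff_le_right
  grind

theorem sdiff_erase_of_inter_eq_singleton {α : Type*} [DecidableEq α] {P U W : Finset α} {r : α}
    (hU : U ⊆ P) (hW : W ⊆ P) (h : U ∩ W = {r}) :
    W ⊆ P \ U.erase r ∧ U ∩ (P \ U.erase r) = {r} ∧ U ∪ (P \ U.erase r) = P := by
  have hmem (x : α) : x ∈ U ∧ x ∈ W ↔ x = r := by
    rw [← Finset.mem_inter, h, Finset.mem_singleton]
  refine ⟨?_, ?_, ?_⟩ <;> grind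

section InvSet

variable {m : ℕ} {w w₁ w₂ : Perm (Fin m)} {i j k k' x y : Fin m}

theorem mk_mem_invSet : (i, j) ∈ invSet m w ↔ i < j ∧ w⁻¹ j < w⁻¹ i := by
  simp [invSet]

theorem invSet_subset_filter_lt (w : Perm (Fin m)) :
    invSet m w ⊆ Finset.univ.filter (fun p => p.1 < p.2) :=
  Finset.monotone_filter_right _ fun _ _ h => h.1

theorem invSet_mul_revPerm (w : Perm (Fin m)) :
    invSet m (w * Fin.revPerm) = Finset.univ.filter (fun p => p.1 < p.2) \ invSet m w := by
  ext ⟨i, j⟩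
  have hne : i < j → w⁻¹ i ≠ w⁻¹ j := fun h => w⁻¹.injective.ne h.ne
  simp only [mk_mem_invSet, mul_inv_rev, Perm.mul_apply, Finset.mem_sdiff, Finset.mem_filter,
    Finset.mem_univ, true_and, Perm.inv_def, Fin.revPerm_symm, Fin.revPerm_apply,
    Fin.rev_lt_rev] at hne ⊢
  grind

theorem invSet_swap_mul_of_covBy (hij : i < j) (hadj : w⁻¹ j ⋖ w⁻¹ i) :
    invSet m (swap i j * w) = (invSet m w).erase (i, j) := by
  have hinv (x : Fin m) : (swap i j * w)⁻¹ x = swap (w⁻¹ j) (w⁻¹ i) (w⁻¹ x) := by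
    rw [mul_inv_rev, swap_inv, swap_comm, Perm.mul_apply, w⁻¹.injective.map_swap]
  ext ⟨x, y⟩
  simp only [Finset.mem_erase, mk_mem_invSet, hinv, swap_lt_swap_iff_of_covBy hadj,
    w⁻¹.injective.eq_iff, ne_eq, Prod.mk.injEq]
  grind

theorem inv_lt_inv_of_invSet_inter (hB : invSet m w₁ ∩ invSet m w₂ = {(k, k')})
    (hij : i < j) (h₁ : w₁⁻¹ j < w₁⁻¹ i) (hne : (i, j) ≠ (k, k')) : w₂⁻¹ i < w₂⁻¹ j := by
  refine (w₂⁻¹.injective.ne hij.ne).lt_of_le (le_of_not_gt fun h₂ => hne ?_)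
  rw [← Finset.mem_singleton, ← hB, Finset.mem_inter]
  exact ⟨mk_mem_invSet.2 ⟨hij, h₁⟩, mk_mem_invSet.2 ⟨hij, h₂⟩⟩

theorem mem_invSet_of_invSet_inter (hB : invSet m w₁ ∩ invSet m w₂ = {(k, k')}) :
    (k, k') ∈ invSet m w₁ ∧ (k, k') ∈ invSet m w₂ :=
  Finset.mem_inter.1 (hB ▸ Finset.mem_singleton_self _)

theorem lt_or_lt_of_between (hB : invSet m w₁ ∩ invSet m w₂ = {(k, k')})
    (hk'x : w₁⁻¹ k' < w₁⁻¹ x) (hxk : w₁⁻¹ x < w₁⁻¹ k) :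
    (x < k ∧ w₂⁻¹ x < w₂⁻¹ k') ∨ (k' < x ∧ w₂⁻¹ k < w₂⁻¹ x) := by
  obtain ⟨hkk', h₂⟩ := mk_mem_invSet.1 (mem_invSet_of_invSet_inter hB).2
  have hne : x ≠ k := by rintro rfl; exact hxk.false
  have hne' : x ≠ k' := by rintro rfl; exact hk'x.false
  have before (h : x < k') : w₂⁻¹ x < w₂⁻¹ k' :=
    inv_lt_inv_of_invSet_inter hB h hk'x (by simp [hne])
  have after (h : k < x) : w₂⁻¹ k < w₂⁻¹ x :=
    inv_lt_inv_of_invSet_inter hB h hxk (by simp [hne'])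
  rcases hne.lt_or_gt with hlt | hgt
  · exact .inl ⟨hlt, before (hlt.trans hkk')⟩
  · refine .inr ⟨hne'.symm.lt_of_le (le_of_not_gt fun hlt => ?_), after hgt⟩
    exact ((before hlt).trans (h₂.trans (after hgt))).false

/-- The block of the letter `x` in the word obtained from `w` by gathering `k'` and `k`: the blocks
`{k'}` and `{k}` are numbered `1` and `2`. Letters outside the segment of `w` from `k'` to `k` stay
on their side, and those inside go to the left of `k'` (block `0`) if they exceed `k'`, and to the
right of `k` (block `3`) otherwise. -/
def gatherBlock (w : Perm (Fin m)) (k k' x : Fin m) : ℕ :=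
  if x = k' then 1
  else if x = k then 2
  else if w⁻¹ x < w⁻¹ k' ∨ (w⁻¹ x < w⁻¹ k ∧ k' < x) then 0
  else 3

/-- The permutation whose word lists the blocks of `gatherBlock w k k'` in increasing order, the
letters of each block being in the same order as in `w`. -/
def gather (w : Perm (Fin m)) (k k' : Fin m) : Perm (Fin m) :=
  Tuple.sort fun x => toLex (gatherBlock w k k' x, w⁻¹ x)

theorem gather_inv_lt_iff : (gather w k k')⁻¹ x < (gather w k k')⁻¹ y ↔
    gatherBlock w k k' x < gatherBlock w k k' y ∨
      gatherBlock w k k' x = gatherBlock w k k' y ∧ w⁻¹ x < w⁻¹ y := by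
  have hinj : Function.Injective fun x => toLex (gatherBlock w k k' x, w⁻¹ x) := fun _ _ h =>
    w⁻¹.injective (Prod.ext_iff.1 (toLex.injective h)).2
  rw [gather, tupleSort_inv_lt_iff hinj, Prod.Lex.toLex_lt_toLex]

theorem gather_inv_covBy (hne : k ≠ k') : (gather w k k')⁻¹ k' ⋖ (gather w k k')⁻¹ k := by
  refine ⟨gather_inv_lt_iff.2 (by simp [gatherBlock, hne]), fun z hk'z hzk => ?_⟩
  obtain ⟨x, rfl⟩ := (gather w k k')⁻¹.surjective z
  rw [gather_inv_lt_iff] at hk'z hzk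
  grind [gatherBlock]

theorem between_of_gatherBlock_lt (h : w⁻¹ k' < w⁻¹ k) (hxy : w⁻¹ x < w⁻¹ y)
    (hblock : gatherBlock w k k' y < gatherBlock w k k' x) :
    (x = k' ∨ w⁻¹ k' < w⁻¹ x ∧ w⁻¹ x < w⁻¹ k ∧ x ≤ k') ∧
      (y = k ∨ w⁻¹ k' < w⁻¹ y ∧ w⁻¹ y < w⁻¹ k ∧ k' < y) := by
  have hx : w⁻¹ x = w⁻¹ k' → x = k' := fun h => w⁻¹.injective h
  grind (splits := 20) [gatherBlock]

theorem lt_and_inv_lt_inv_of_gather_inv_lt (hB : invSet m w₁ ∩ invSet m w₂ = {(k, k')})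
    (hxy : w₁⁻¹ x < w₁⁻¹ y) (hyx : (gather w₁ k k')⁻¹ y < (gather w₁ k k')⁻¹ x) :
    x < y ∧ w₂⁻¹ x < w₂⁻¹ y := by
  obtain ⟨hkk', h₁⟩ := mk_mem_invSet.1 (mem_invSet_of_invSet_inter hB).1
  have h₂ := (mk_mem_invSet.1 (mem_invSet_of_invSet_inter hB).2).2
  have hblock : gatherBlock w₁ k k' y < gatherBlock w₁ k k' x :=
    (gather_inv_lt_iff.1 hyx).resolve_right fun h => hxy.asymm h.2
  obtain ⟨hx, hy⟩ := between_of_gatherBlock_lt h₁ hxy hblock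
  have hx' : x = k' ∨ x < k ∧ w₂⁻¹ x < w₂⁻¹ k' := hx.imp_right fun ⟨hk'x, hxk, hle⟩ =>
    (lt_or_lt_of_between hB hk'x hxk).resolve_right fun h => hle.not_gt h.1
  have hy' : y = k ∨ k' < y ∧ w₂⁻¹ k < w₂⁻¹ y := hy.imp_right fun ⟨hk'y, hyk, hlt⟩ =>
    (lt_or_lt_of_between hB hk'y hyk).resolve_left fun h => (hkk'.trans hlt).asymm h.1
  rcases hx' with rfl | ⟨hxk, hxk'⟩ <;> rcases hy' with rfl | ⟨hk'y, hky⟩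
  · simp [gatherBlock, hkk'.ne] at hblock
  · exact ⟨hk'y, h₂.trans hky⟩
  · exact ⟨hxk, hxk'.trans h₂⟩
  · exact ⟨hxk.trans (hkk'.trans hk'y), hxk'.trans (h₂.trans hky)⟩

theorem invSet_subset_invSet_gather (hB : invSet m w₁ ∩ invSet m w₂ = {(k, k')}) :
    invSet m w₁ ⊆ invSet m (gather w₁ k k') := by
  rintro ⟨i, j⟩ hij
  rw [mk_mem_invSet] at hij ⊢
  refine ⟨hij.1, ((gather w₁ k k')⁻¹.injective.ne hij.1.ne').lt_of_le (le_of_not_gt fun h => ?_)⟩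
  exact hij.1.asymm (lt_and_inv_lt_inv_of_gather_inv_lt hB hij.2 h).1

theorem invSet_gather_inter (hB : invSet m w₁ ∩ invSet m w₂ = {(k, k')}) :
    invSet m (gather w₁ k k') ∩ invSet m w₂ = {(k, k')} := by
  refine Finset.Subset.antisymm ?_
    (hB ▸ Finset.inter_subset_inter_right (invSet_subset_invSet_gather hB))
  rintro ⟨i, j⟩ h
  obtain ⟨hu, h₂⟩ := Finset.mem_inter.1 h
  rw [← hB]
  refine Finset.mem_inter.2 ⟨?_, h₂⟩
  rw [mk_mem_invSet] at hu h₂ ⊢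
  refine ⟨hu.1, (w₁⁻¹.injective.ne hu.1.ne').lt_of_le (le_of_not_gt fun h₁ => ?_)⟩
  exact h₂.2.asymm (lt_and_inv_lt_inv_of_gather_inv_lt hB h₁ hu.2).2

end InvSet

theorem fillup_single_simple_general {m : ℕ} (w₁ w₂ : Equiv.Perm (Fin m))
    (k k' : Fin m) (hB : invSet m w₁ ∩ invSet m w₂ = {(k, k')}) :
    ∃ w₁' w₂' : Equiv.Perm (Fin m),
      invSet m w₁ ⊆ invSet m w₁' ∧ invSet m w₂ ⊆ invSet m w₂' ∧
      invSet m w₁' ∩ invSet m w₂' = {(k, k')} ∧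
      invSet m w₁' ∪ invSet m w₂' = Finset.univ.filter (fun p => p.1 < p.2) := by
  obtain ⟨hkk', -⟩ := mk_mem_invSet.1 (mem_invSet_of_invSet_inter hB).1
  obtain ⟨hw₂, hinter, hunion⟩ := sdiff_erase_of_inter_eq_singleton
    (invSet_subset_filter_lt (gather w₁ k k')) (invSet_subset_filter_lt w₂) (invSet_gather_inter hB)
  rw [← invSet_swap_mul_of_covBy hkk' (gather_inv_covBy hkk'.ne), ← invSet_mul_revPerm]
    at hw₂ hinter hunion
  exact ⟨_, _, invSet_subset_invSet_gather hB, hw₂, hinter, hunion⟩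

/-- The fill-up theorem for `B = {(k, k+1)}` a single simple pair. -/
theorem fillup_single_simple {m : ℕ} (w₁ w₂ : Equiv.Perm (Fin m))
    (k k' : Fin m) (hk : (k : ℕ) + 1 = (k' : ℕ))
    (hB : invSet m w₁ ∩ invSet m w₂ = {(k, k')}) :
    ∃ w₁' w₂' : Equiv.Perm (Fin m),
      invSet m w₁ ⊆ invSet m w₁' ∧ invSet m w₂ ⊆ invSet m w₂' ∧
      invSet m w₁' ∩ invSet m w₂' = {(k, k')} ∧
      invSet m w₁' ∪ invSet m w₂' = Finset.univ.filter (fun p => p.1 < p.2) :=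
  fillup_single_simple_general w₁ w₂ k k' hB
end

section
/- Let w₁, w₂ ∈ S_m and set B := N(w₁) ∩ N(w₂). Assume B is nonempty, pairwise orthogonal, and every element of B is a simple pair (of the form (k, k+1)). Then there exist w₁', w₂' ∈ S_m with N(w₁) ⊆ N(w₁'), N(w₂) ⊆ N(w₂'), N(w₁') ∩ N(w₂') = B, and N(w₁') ∪ N(w₂') = {(i,j) | 1 ≤ i < j ≤ m}. -/
/-!
Call a relation contained in `<` biclosed if both it and its complement in `<` are transitive;
inversion sets are exactly the biclosed relations on `Fin m`. Let `B = N(w₁) ∩ N(w₂)` consist of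
the pairs inside the blocks of a partition into intervals, given as the fibres of a monotone map;
for pairwise orthogonal simple pairs the blocks are these pairs and singletons. Both permutations
reverse every block, so for blocks `p < q` the relation `N(w₁)` meets `p × q` if and only if it
contains `(min p, max q)`, and likewise for `N(w₂)`. Hence the relations that `N(w₁)` and `N(w₂)`
induce on the set of blocks are disjoint. They are also coclosed, so the transitive closure `C` of
the first one is biclosed and still disjoint from the second. Now invert in `w₂'` all pairs not
lying over `C`, and in `w₁'` the pairs lying over `C` together with `B`.
-/

section Biclosed

variable {α β : Type*}

/-- A coclosed relation, in the sense used for sets of positive roots of type `A`: its complement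
in `<` is transitive. -/
def IsCoclosed [LT α] (r : α → α → Prop) : Prop :=
  ∀ ⦃a b c⦄, a < b → b < c → r a c → r a b ∨ r b c

/-- A biclosed set of positive roots of type `A`, encoded as a relation contained in `<`. -/
structure IsBiclosed [LT α] (r : α → α → Prop) : Prop where
  lt : ∀ ⦃a b⦄, r a b → a < b
  trans : ∀ ⦃a b c⦄, r a b → r b c → r a c
  coclosed : IsCoclosed r

/-- The relation induced by `r` on the set `β` of blocks, where the blocks are the fibres of `f`:
a block `p` is related to a later block `q` if some element of `p` is related to some element
of `q`. -/
def BlockRel [LT β] (f : α → β) (r : α → α → Prop) (p q : β) : Prop :=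
  p < q ∧ Relation.Map r f f p q

theorem IsBiclosed.compl [Preorder α] {r : α → α → Prop} (hr : IsBiclosed r) :
    IsBiclosed fun a b => a < b ∧ ¬r a b where
  lt _ _ h := h.1
  trans _ _ _ hab hbc :=
    ⟨hab.1.trans hbc.1, fun hac => (hr.coclosed hab.1 hbc.1 hac).elim hab.2 hbc.2⟩
  coclosed a b c hab hbc hac := by
    by_contra! h
    exact hac.2 (hr.trans (h.1 hab) (h.2 hbc))

theorem IsCoclosed.not_of_transGen [Preorder α] {r s : α → α → Prop} (hs : IsCoclosed s)
    (hlt : ∀ ⦃a b⦄, r a b → a < b) (hrs : ∀ ⦃a b⦄, r a b → ¬s a b) {a b : α}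
    (h : Relation.TransGen r a b) : ¬s a b := by
  induction h with
  | single hab => exact hrs hab
  | tail hab hbc ih =>
    exact fun hac => (hs (Relation.transGen_minimal hlt _ _ hab) (hlt hbc) hac).elim ih (hrs hbc)

theorem rel_of_le_of_le_of_fibers [PartialOrder α] {r : α → α → Prop} [IsTrans α r] {f : α → β}
    (hfiber : ∀ ⦃a b⦄, a < b → f a = f b → r a b) {a a' b b' : α} (ha : a' ≤ a)
    (hfa : f a' = f a) (hb : b ≤ b') (hfb : f b = f b') (hab : r a b) : r a' b' := by
  have hab' : r a b' := hb.eq_or_lt.elim (· ▸ hab) fun h => _root_.trans hab (hfiber h hfb)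
  exact ha.eq_or_lt.elim (· ▸ hab') fun h => _root_.trans (hfiber h hfa) hab'

variable [LinearOrder α] [LinearOrder β]

theorem IsBiclosed.comap {r : β → β → Prop} (hr : IsBiclosed r) {f : α → β} (hf : Monotone f) :
    IsBiclosed fun a b => r (f a) (f b) where
  lt _ _ h := hf.reflect_lt (hr.lt h)
  trans _ _ _ hab hbc := hr.trans hab hbc
  coclosed a b c hab hbc hac := by
    beta_reduce at hac ⊢
    rcases (hf hab.le).eq_or_lt with hab' | hab'
    · exact .inr (hab' ▸ hac)
    rcases (hf hbc.le).eq_or_lt with hbc' | hbc'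
    · exact .inl (hbc' ▸ hac)
    exact hr.coclosed hab' hbc' hac

theorem IsCoclosed.transGen {r : α → α → Prop} (hr : IsCoclosed r) :
    IsCoclosed (Relation.TransGen r) := by
  intro a b c hab hbc hac
  induction hac with
  | single hac => exact (hr hab hbc hac).imp .single .single
  | @tail d c had hdc ih =>
    rcases lt_trichotomy b d with hbd | rfl | hdb
    · exact (ih hbd).imp_right (.tail · hdc)
    · exact .inl had
    · exact (hr hdb hbc hdc).imp had.tail .single

theorem IsCoclosed.isBiclosed_transGen {r : α → α → Prop} (hr : IsCoclosed r)
    (hlt : ∀ ⦃a b⦄, r a b → a < b) : IsBiclosed (Relation.TransGen r) where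
  lt := Relation.transGen_minimal hlt
  trans _ _ _ := .trans
  coclosed := hr.transGen

theorem IsCoclosed.blockRel {r : α → α → Prop} (hr : IsCoclosed r) {f : α → β}
    (hf : Monotone f) (hsurj : f.Surjective) : IsCoclosed (BlockRel f r) := by
  rintro _ q _ hab hbc ⟨-, a, c, hac, rfl, rfl⟩
  obtain ⟨b, rfl⟩ := hsurj q
  exact (hr (hf.reflect_lt hab) (hf.reflect_lt hbc) hac).imp
    (⟨hab, a, b, ·, rfl, rfl⟩) (⟨hbc, b, c, ·, rfl, rfl⟩)

theorem BlockRel.not_blockRel {r s : α → α → Prop} [IsTrans α r] [IsTrans α s] {f : α → β}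
    (hrs : ∀ a b, r a b ∧ s a b ↔ a < b ∧ f a = f b) ⦃p q : β⦄
    (hpq : BlockRel f r p q) : ¬BlockRel f s p q := by
  obtain ⟨hlt, a₁, b₁, h₁, ha₁, hb₁⟩ := hpq
  rintro ⟨-, a₂, b₂, h₂, ha₂, hb₂⟩
  have ha : f (min a₁ a₂) = p := by rcases min_choice a₁ a₂ with h | h <;> rwa [h]
  have hb : f (max b₁ b₂) = q := by rcases max_choice b₁ b₂ with h | h <;> rwa [h]
  have hr' : r (min a₁ a₂) (max b₁ b₂) :=
    rel_of_le_of_le_of_fibers (fun a b h e => ((hrs a b).2 ⟨h, e⟩).1)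
      (min_le_left ..) (ha.trans ha₁.symm) (le_max_left ..) (hb₁.trans hb.symm) h₁
  have hs' : s (min a₁ a₂) (max b₁ b₂) :=
    rel_of_le_of_le_of_fibers (fun a b h e => ((hrs a b).2 ⟨h, e⟩).2)
      (min_le_right ..) (ha.trans ha₂.symm) (le_max_right ..) (hb₂.trans hb.symm) h₂
  exact hlt.ne (ha ▸ hb ▸ ((hrs _ _).1 ⟨hr', hs'⟩).2)

theorem IsBiclosed.exists_fillup {r s : α → α → Prop} (hr : IsBiclosed r) (hs : IsBiclosed s)
    {f : α → β} (hf : Monotone f) (hsurj : f.Surjective)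
    (hrs : ∀ a b, r a b ∧ s a b ↔ a < b ∧ f a = f b) :
    ∃ r' s' : α → α → Prop, IsBiclosed r' ∧ IsBiclosed s' ∧
      (∀ a b, r a b → r' a b) ∧ (∀ a b, s a b → s' a b) ∧
      (∀ a b, r' a b ∧ s' a b ↔ a < b ∧ f a = f b) ∧ ∀ a b, r' a b ∨ s' a b ↔ a < b := by
  have : IsTrans α r := ⟨hr.trans⟩
  have : IsTrans α s := ⟨hs.trans⟩
  let C := Relation.TransGen (BlockRel f r)
  have hlt ⦃p q : β⦄ : BlockRel f r p q → p < q := And.left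
  have hC : IsBiclosed C := (hr.coclosed.blockRel hf hsurj).isBiclosed_transGen hlt
  have hCs {p q : β} : C p q → ¬BlockRel f s p q :=
    (hs.coclosed.blockRel hf hsurj).not_of_transGen hlt (BlockRel.not_blockRel hrs)
  refine ⟨fun a b => a < b ∧ ¬(f a < f b ∧ ¬C (f a) (f b)), fun a b => a < b ∧ ¬C (f a) (f b),
    (hC.compl.comap hf).compl, (hC.comap hf).compl, fun a b hab => ⟨hr.lt hab, ?_⟩,
    fun a b hab => ⟨hs.lt hab, ?_⟩, fun a b => ⟨?_, ?_⟩, fun a b => ⟨?_, ?_⟩⟩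
  · exact fun h => h.2 (.single ⟨h.1, a, b, hab, rfl, rfl⟩)
  · exact fun h => hCs h ⟨hC.lt h, a, b, hab, rfl, rfl⟩
  · rintro ⟨⟨hab, hr'⟩, -, hs'⟩
    exact ⟨hab, (hf hab.le).eq_of_not_lt fun h => hr' ⟨h, hs'⟩⟩
  · rintro ⟨hab, hfab⟩
    exact ⟨⟨hab, fun h => h.1.ne hfab⟩, hab, fun h => (hC.lt h).ne hfab⟩
  · exact fun h => h.elim And.left And.left
  · exact fun hab => (em (C (f a) (f b))).imp (fun h => ⟨hab, fun h' => h'.2 h⟩) fun h => ⟨hab, h⟩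

theorem IsBiclosed.isStrictTotalOrder {r : α → α → Prop} (hr : IsBiclosed r) :
    IsStrictTotalOrder α fun a b => a < b ∧ ¬r a b ∨ r b a where
  irrefl a h := h.elim (fun h => h.1.false) fun h => (hr.lt h).false
  trichotomous a b hab hba := by
    have := lt_trichotomy a b
    tauto
  trans a b c hab hbc := by
    have hlt := hr.lt
    have htrans := hr.trans
    have hcoclosed {x y z : α} := @hr.coclosed x y z
    grind

end Biclosed

theorem nonempty_relIso_fin {α : Type*} [Fintype α] {m : ℕ} (hcard : Fintype.card α = m)
    (r : α → α → Prop) [IsStrictTotalOrder α r] :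
    Nonempty (r ≃r ((· < ·) : Fin m → Fin m → Prop)) := by
  classical
  let := linearOrderOfSTO r
  exact ⟨(Fintype.orderIsoFinOfCardEq α hcard).symm.toRelIsoLT⟩

section Permutations

variable {m : ℕ}

theorem mem_invSet {w : Equiv.Perm (Fin m)} {i j : Fin m} :
    (i, j) ∈ invSet m w ↔ i < j ∧ w⁻¹ j < w⁻¹ i := by
  simp [invSet]

theorem isBiclosed_invSet (w : Equiv.Perm (Fin m)) :
    IsBiclosed fun i j => (i, j) ∈ invSet m w where
  lt _ _ h := (mem_invSet.1 h).1
  trans i j k hij hjk := by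
    rw [mem_invSet] at *
    exact ⟨hij.1.trans hjk.1, hjk.2.trans hij.2⟩
  coclosed i j k hij hjk hik := by
    simp only [mem_invSet, hij, hjk, true_and] at *
    exact (lt_or_ge (w⁻¹ j) (w⁻¹ i)).imp_right hik.2.trans_le

theorem IsBiclosed.exists_mem_invSet_iff {r : Fin m → Fin m → Prop} (hr : IsBiclosed r) :
    ∃ w : Equiv.Perm (Fin m), ∀ i j, (i, j) ∈ invSet m w ↔ r i j := by
  have := hr.isStrictTotalOrder
  obtain ⟨e⟩ := nonempty_relIso_fin (Fintype.card_fin m) fun i j => i < j ∧ ¬r i j ∨ r j i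
  refine ⟨e.toEquiv.symm, fun i j => ?_⟩
  have hlt : e j < e i ↔ j < i ∧ ¬r j i ∨ r i j := e.map_rel_iff
  rw [mem_invSet]
  change i < j ∧ e j < e i ↔ r i j
  rw [hlt]
  exact ⟨fun ⟨hij, h⟩ => h.resolve_left fun h' => hij.not_gt h'.1, fun h => ⟨hr.lt h, .inr h⟩⟩

theorem exists_monotone_fibers_eq {B : Finset (Fin m × Fin m)} (horth : PairwiseOrth B)
    (hsimple : ∀ p ∈ B, IsSimplePair p) :
    ∃ f : Fin m → ℕ, Monotone f ∧ ∀ i j, (i, j) ∈ B ↔ i < j ∧ f i = f j := by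
  classical
  have hsucc {i j : Fin m} (h : (i, j) ∈ B) : (i : ℕ) + 1 = j := hsimple _ h
  let f (j : Fin m) : ℕ := if ∃ i, (i, j) ∈ B then j - 1 else j
  have hf_le (j : Fin m) : f j ≤ j := by
    dsimp only [f]
    split_ifs <;> omega
  have le_hf (j : Fin m) : (j : ℕ) - 1 ≤ f j := by
    dsimp only [f]
    split_ifs <;> omega
  refine ⟨f, fun i j hij => ?_, fun i j => ⟨fun hij => ?_, fun ⟨hlt, heq⟩ => ?_⟩⟩
  · rcases hij.eq_or_lt with rfl | hij
    · rfl
    · exact (hf_le i).trans ((Nat.le_sub_one_of_lt hij).trans (le_hf j))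
  · have hi : ¬∃ k, (k, i) ∈ B := fun ⟨k, hki⟩ =>
      have hne : (k, i) ≠ (i, j) := by grind
      (horth _ hki _ hij hne).2.2.1 rfl
    have hfi : f i = i := if_neg hi
    have hfj : f j = j - 1 := if_pos ⟨i, hij⟩
    have := hsucc hij
    omega
  · obtain ⟨k, hkj⟩ : ∃ k, (k, j) ∈ B := by
      by_contra h
      have hfj : f j = j := if_neg h
      exact (heq ▸ (hf_le i).trans_lt hlt).ne hfj
    have hki : k = i := by
      have := hsucc hkj
      have := hf_le i
      have := le_hf j
      omega
    exact hki ▸ hkj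

theorem fillup_simple_general {β : Type*} [LinearOrder β] (w₁ w₂ : Equiv.Perm (Fin m))
    (B : Finset (Fin m × Fin m)) (hB : B = invSet m w₁ ∩ invSet m w₂)
    {f : Fin m → β} (hf : Monotone f) (hfB : ∀ i j, (i, j) ∈ B ↔ i < j ∧ f i = f j) :
    ∃ w₁' w₂' : Equiv.Perm (Fin m),
      invSet m w₁ ⊆ invSet m w₁' ∧ invSet m w₂ ⊆ invSet m w₂' ∧
      invSet m w₁' ∩ invSet m w₂' = B ∧
      invSet m w₁' ∪ invSet m w₂' = Finset.univ.filter (fun p => p.1 < p.2) := by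
  obtain ⟨r₁, r₂, hr₁, hr₂, h₁, h₂, hinter, hunion⟩ :=
    (isBiclosed_invSet w₁).exists_fillup (isBiclosed_invSet w₂) (f := Set.rangeFactorization f)
      (fun _ _ h => hf h) Set.rangeFactorization_surjective
      fun i j => by rw [← Finset.mem_inter, ← hB, hfB, Subtype.ext_iff]; rfl
  obtain ⟨w₁', hw₁⟩ := hr₁.exists_mem_invSet_iff
  obtain ⟨w₂', hw₂⟩ := hr₂.exists_mem_invSet_iff
  refine ⟨w₁', w₂', fun ⟨i, j⟩ h => (hw₁ i j).2 (h₁ i j h), fun ⟨i, j⟩ h => (hw₂ i j).2 (h₂ i j h),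
    ?_, ?_⟩ <;> ext ⟨i, j⟩
  · rw [Finset.mem_inter, hw₁, hw₂, hinter, hfB, Subtype.ext_iff]
    rfl
  · rw [Finset.mem_union, hw₁, hw₂, hunion, Finset.mem_filter_univ]

end Permutations

/-- The fill-up theorem when `B = N(w₁) ∩ N(w₂)` consists of pairwise orthogonal
simple pairs. -/
theorem fillup_simple {m : ℕ} (w₁ w₂ : Equiv.Perm (Fin m))
    (B : Finset (Fin m × Fin m)) (hB : B = invSet m w₁ ∩ invSet m w₂)
    (hne : B.Nonempty) (horth : PairwiseOrth B)
    (hsimple : ∀ p ∈ B, IsSimplePair p) :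
    ∃ w₁' w₂' : Equiv.Perm (Fin m),
      invSet m w₁ ⊆ invSet m w₁' ∧ invSet m w₂ ⊆ invSet m w₂' ∧
      invSet m w₁' ∩ invSet m w₂' = B ∧
      invSet m w₁' ∪ invSet m w₂' = Finset.univ.filter (fun p => p.1 < p.2) := by
  obtain ⟨f, hf, hfB⟩ := exists_monotone_fibers_eq horth hsimple
  exact fillup_simple_general w₁ w₂ B hB hf hfB
end
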